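/- For all X, Y ∈ ζ_s^+ the matrix X + Y is invertible, and for every u ∈ ℂⁿ the twisted convolution integral ∫_{ℂⁿ} γ_X(u − v) · γ_Y(v) · e^{−i·Im⟨u, sv⟩} dvol(v) converges absolutely and equals γ_{X∘Y}(u), where X ∘ Y = (Y + s)(X + Y)^{-1}(X + s) − s. -/

import Mathlib

open Matrix MeasureTheory
open scoped ComplexOrder

/-- The signature matrix `s = diag(1,…,1,−1,…,−1)` with `p` entries `+1` and `q`
entries `−1`. -/
noncomputable def sMat (p q : ℕ) : Matrix (Fin (p + q)) (Fin (p + q)) ℂ :=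
  Matrix.diagonal (fun i => if (i : ℕ) < p then 1 else -1)

/-- The Gaussian function `γ_X(v) = det(X + s) exp(−½⟨v, Xv⟩)` associated to
`X ∈ ζ_s⁺`. -/
noncomputable def gaussianFn (p q : ℕ) (X : Matrix (Fin (p + q)) (Fin (p + q)) ℂ)
    (v : Fin (p + q) → ℂ) : ℂ :=
  (X + sMat p q).det * Complex.exp (-(1 / 2 : ℂ) * (star v ⬝ᵥ (X *ᵥ v)))

/-- The normalized Lebesgue measure `dvol = (2π)^{-n} · Leb` on `ℂⁿ`, for which
`∫ exp(−⟨v,v⟩/2) dvol(v) = 1`. -/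
noncomputable def dvol (n : ℕ) : Measure (Fin n → ℂ) :=
  (ENNReal.ofReal ((2 * Real.pi) ^ n))⁻¹ • (volume : Measure (Fin n → ℂ))

open Complex
open scoped Real

/-!
Since `s` is Hermitian, the phase `exp(-i·Im⟨u, sv⟩)` is `exp(-½(⟨u, sv⟩ - ⟨v, su⟩))`, so up to a
factor depending only on `u` the integrand is
`exp(-½(v†(X + Y)v - u†(X - s)v - v†(X + s)u))`. For any `A` with `A + A†` positive definite,
`∫ exp(-½(v†Av - aᵀv - v†b)) dvol(v) = det(A)⁻¹ exp(½ aᵀA⁻¹b)`: a congruence that simultaneously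
diagonalizes the Hermitian matrices `A + A†` and `(A - A†)/2i` makes `A` diagonal, and the integral
then splits into Gaussian integrals over `ℂ`. With `A = X + Y` the resulting quadratic form in `u`
is `X - (X - s)(X + Y)⁻¹(X + s)`, which is another expression for `X ∘ Y`.
-/

section LinearAlgebra

variable {ι : Type*} [Fintype ι]

section CommRing

variable {R : Type*} [CommRing R]

theorem star_dotProduct_mulVec_eq_star [StarRing R] {S : Matrix ι ι R} (hS : S.IsHermitian)
    (u v : ι → R) : star v ⬝ᵥ S *ᵥ u = star (star u ⬝ᵥ S *ᵥ v) := by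
  rw [← star_dotProduct, star_mulVec, hS.eq, dotProduct_mulVec]

variable [DecidableEq ι]

theorem mul_inv_mul_mul_mul_cancel {P Q : Matrix ι ι R} (hP : IsUnit P) (hQ : IsUnit Q)
    (A : Matrix ι ι R) : P * (Q * A * P)⁻¹ * Q = A⁻¹ := by
  have hP_det := (isUnit_iff_isUnit_det P).mp hP
  have hQ_det := (isUnit_iff_isUnit_det Q).mp hQ
  rw [Matrix.mul_inv_rev, Matrix.mul_inv_rev, mul_nonsing_inv_cancel_left _ _ hP_det,
    nonsing_inv_mul_cancel_right _ _ hQ_det]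

theorem add_mul_inv_add_mul_add_sub {X Y : Matrix ι ι R} (hXY : IsUnit (X + Y))
    (S : Matrix ι ι R) :
    (Y + S) * (X + Y)⁻¹ * (X + S) - S = X - (X - S) * (X + Y)⁻¹ * (X + S) := by
  have hinv : (X + Y) * (X + Y)⁻¹ = 1 := mul_nonsing_inv _ ((isUnit_iff_isUnit_det _).mp hXY)
  have hYS : Y + S = (X + Y) - (X - S) := by abel
  rw [hYS, sub_mul, sub_mul, hinv]
  noncomm_ring

end CommRing

theorem inv_diagonal_mulVec {K : Type*} [Field K] [DecidableEq ι] {d : ι → K}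
    (hd : ∀ i, d i ≠ 0) (b : ι → K) : (diagonal d)⁻¹ *ᵥ b = fun i => b i / d i := by
  have hinv : (diagonal d)⁻¹ = diagonal d⁻¹ :=
    inv_eq_right_inv (by simp [diagonal_mul_diagonal, hd])
  ext i
  rw [hinv, mulVec_diagonal, Pi.inv_apply, inv_mul_eq_div]

theorem neg_I_mul_im_star_dotProduct_mulVec {S : Matrix ι ι ℂ} (hS : S.IsHermitian)
    (u v : ι → ℂ) :
    -I * ((star u ⬝ᵥ S *ᵥ v).im : ℂ) = -(1 / 2) * (star u ⬝ᵥ S *ᵥ v - star v ⬝ᵥ S *ᵥ u) := by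
  rw [star_dotProduct_mulVec_eq_star hS u v, ← starRingEnd_apply (star u ⬝ᵥ S *ᵥ v), sub_conj]
  push_cast
  ring

variable [DecidableEq ι]

open scoped MatrixOrder in
theorem exists_conjTranspose_mul_mul_eq_one_and_eq_diagonal {𝕜 : Type*} [RCLike 𝕜]
    {H K : Matrix ι ι 𝕜} (hH : H.PosDef) (hK : K.IsHermitian) :
    ∃ (P : Matrix ι ι 𝕜) (d : ι → ℝ), IsUnit P ∧ Pᴴ * H * P = 1 ∧
      Pᴴ * K * P = diagonal fun i => (d i : 𝕜) := by
  obtain ⟨B, hB, rfl⟩ :=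
    CStarAlgebra.isStrictlyPositive_iff_eq_star_mul_self.mp hH.isStrictlyPositive
  have hBinv : B * B⁻¹ = 1 := mul_nonsing_inv B ((isUnit_iff_isUnit_det B).mp hB)
  have hL : (B⁻¹ᴴ * K * B⁻¹).IsHermitian := isHermitian_conjTranspose_mul_mul B⁻¹ hK
  set U := (hL.eigenvectorUnitary : Matrix ι ι 𝕜)
  have hU : Uᴴ * U = 1 := Unitary.coe_star_mul_self hL.eigenvectorUnitary
  have hdiag : Uᴴ * (B⁻¹ᴴ * K * B⁻¹) * U = diagonal fun i => (hL.eigenvalues i : 𝕜) := by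
    have := hL.conjStarAlgAut_star_eigenvectorUnitary
    rwa [Unitary.conjStarAlgAut_star_apply] at this
  refine ⟨B⁻¹ * U, hL.eigenvalues, ?_, ?_, ?_⟩
  · exact (isUnit_nonsing_inv_iff.mpr hB).mul (IsUnit.of_mul_eq_one_right Uᴴ hU)
  · calc (B⁻¹ * U)ᴴ * (Bᴴ * B) * (B⁻¹ * U)
        = Uᴴ * ((B * B⁻¹)ᴴ * (B * B⁻¹)) * U := by simp only [conjTranspose_mul, mul_assoc]
      _ = 1 := by rw [hBinv, conjTranspose_one, mul_one, mul_one, hU]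
  · rw [← hdiag, conjTranspose_mul]
    simp only [mul_assoc]

theorem exists_conjTranspose_mul_mul_eq_diagonal {A : Matrix ι ι ℂ} (hA : (A + Aᴴ).PosDef) :
    ∃ (P : Matrix ι ι ℂ) (d : ι → ℂ), IsUnit P ∧ (∀ i, 0 < (d i).re) ∧
      Pᴴ * A * P = diagonal d := by
  set K := (imaginaryPart A : Matrix ι ι ℂ)
  obtain ⟨P, k, hP, hH, hK⟩ :=
    exists_conjTranspose_mul_mul_eq_one_and_eq_diagonal hA (imaginaryPart A).2
  have hA_eq : A = (2 : ℝ)⁻¹ • (A + Aᴴ) + I • K := (realPart_add_I_smul_imaginaryPart A).symm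
  refine ⟨P, fun i => 1 / 2 + I * k i, hP, fun i => by simp, ?_⟩
  calc Pᴴ * A * P
      = Pᴴ * ((2 : ℝ)⁻¹ • (A + Aᴴ) + I • K) * P := by rw [← hA_eq]
    _ = (2 : ℝ)⁻¹ • (Pᴴ * (A + Aᴴ) * P) + I • (Pᴴ * K * P) := by
        simp only [mul_add, add_mul, Matrix.mul_smul, Matrix.smul_mul, smul_add]
    _ = diagonal fun i => 1 / 2 + I * k i := by
        rw [hH, hK, ← diagonal_one, ← diagonal_smul, ← diagonal_smul, diagonal_add]
        simp

theorem isUnit_of_posDef_add_conjTranspose {A : Matrix ι ι ℂ} (hA : (A + Aᴴ).PosDef) :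
    IsUnit A := by
  obtain ⟨P, d, -, hd, hPA⟩ := exists_conjTranspose_mul_mul_eq_diagonal hA
  have hdiag : IsUnit (Pᴴ * A * P) := by
    rw [hPA, isUnit_diagonal, Pi.isUnit_iff]
    exact fun i => isUnit_iff_ne_zero.mpr (ne_zero_of_re_pos (hd i))
  exact (IsUnit.mul_iff.mp (IsUnit.mul_iff.mp hdiag).1).2

end LinearAlgebra

section ChangeOfVariables

variable {ι E : Type*} [Fintype ι] [DecidableEq ι] [NormedAddCommGroup E]

theorem measurableEmbedding_mulVec {P : Matrix ι ι ℂ} (hP : IsUnit P) :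
    MeasurableEmbedding (P *ᵥ ·) :=
  (by fun_prop : Continuous (P *ᵥ ·)).measurableEmbedding (mulVec_injective_iff_isUnit.mpr hP)

theorem map_mulVec_volume {P : Matrix ι ι ℂ} (hP : IsUnit P) :
    Measure.map (P *ᵥ ·) volume = ENNReal.ofReal (normSq P.det)⁻¹ • volume := by
  have hdet : LinearMap.det (P.toLin'.restrictScalars ℝ) = normSq P.det := by
    rw [LinearMap.det_restrictScalars, LinearMap.det_toLin', Algebra.norm_complex_apply]
  have hdet_ne : LinearMap.det (P.toLin'.restrictScalars ℝ) ≠ 0 := by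
    simpa only [hdet, ne_eq, map_eq_zero] using ((isUnit_iff_isUnit_det P).mp hP).ne_zero
  have hmap := Measure.map_linearMap_addHaar_eq_smul_addHaar volume hdet_ne
  rwa [hdet, abs_of_nonneg (inv_nonneg.mpr (normSq_nonneg _))] at hmap

theorem integrable_comp_mulVec_iff {P : Matrix ι ι ℂ} (hP : IsUnit P) {f : (ι → ℂ) → E} :
    Integrable (fun w => f (P *ᵥ w)) ↔ Integrable f := by
  have hdet : 0 < (normSq P.det)⁻¹ :=
    inv_pos.mpr (normSq_pos.mpr ((isUnit_iff_isUnit_det P).mp hP).ne_zero)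
  rw [← integrable_smul_measure (f := f) (ENNReal.ofReal_pos.mpr hdet).ne' ENNReal.ofReal_ne_top,
    ← map_mulVec_volume hP, (measurableEmbedding_mulVec hP).integrable_map_iff, Function.comp_def]

theorem integral_comp_mulVec [NormedSpace ℝ E] {P : Matrix ι ι ℂ} (hP : IsUnit P)
    (f : (ι → ℂ) → E) :
    ∫ w, f (P *ᵥ w) = (normSq P.det)⁻¹ • ∫ v, f v := by
  rw [← (measurableEmbedding_mulVec hP).integral_map, map_mulVec_volume hP,
    integral_smul_measure, ENNReal.toReal_ofReal (inv_nonneg.mpr (normSq_nonneg _))]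

end ChangeOfVariables

section OneVariable

variable {d : ℂ}

theorem cexp_quadratic_measurableEquivPi_symm (d α β : ℂ) (v : Fin 2 → ℝ) :
    let z := measurableEquivPi.symm v
    cexp (-(1 / 2) * (d * (star z * z) - α * z - star z * β)) =
      cexp (-(d / 2) * ∑ i, (v i : ℂ) ^ 2 +
        ∑ i, ![(α + β) / 2, I * (α - β) / 2] i * v i) := by
  intro z
  have hz : z = v 0 + v 1 * I := rfl
  have hz_star : star z = v 0 - v 1 * I := by simp [hz, sub_eq_add_neg]
  rw [hz_star, hz]
  simp only [Fin.sum_univ_two, cons_val_zero, cons_val_one]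
  congr 1
  linear_combination (1 / 2 * d * v 1 ^ 2) * I_sq

theorem integrable_cexp_star_mul_quadratic (hd : 0 < d.re) (α β : ℂ) :
    Integrable fun z : ℂ => cexp (-(1 / 2) * (d * (star z * z) - α * z - star z * β)) := by
  rw [← volume_preserving_equiv_pi.symm.integrable_comp_emb
    measurableEquivPi.symm.measurableEmbedding, Function.comp_def]
  simp only [cexp_quadratic_measurableEquivPi_symm]
  exact GaussianFourier.integrable_cexp_neg_mul_sum_add (by simpa using hd) _

theorem integral_cexp_star_mul_quadratic (hd : 0 < d.re) (α β : ℂ) :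
    ∫ z : ℂ, cexp (-(1 / 2) * (d * (star z * z) - α * z - star z * β)) =
      2 * π / d * cexp (1 / 2 * (α * (β / d))) := by
  have hd₀ : d ≠ 0 := ne_zero_of_re_pos hd
  have hexponent : (((α + β) / 2) ^ 2 + (I * (α - β) / 2) ^ 2) / (4 * (d / 2)) =
      1 / 2 * (α * (β / d)) := by
    field_simp
    linear_combination (α - β) ^ 2 * I_sq
  have hfactor : (π : ℂ) / (d / 2) = 2 * π / d := by field_simp
  rw [← volume_preserving_equiv_pi.symm.integral_comp
    measurableEquivPi.symm.measurableEmbedding]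
  simp only [cexp_quadratic_measurableEquivPi_symm]
  rw [GaussianFourier.integral_cexp_neg_mul_sum_add (by simpa using hd), Fintype.card_fin,
    Nat.cast_ofNat, div_self two_ne_zero, cpow_one, hfactor]
  simp only [Fin.sum_univ_two, cons_val_zero, cons_val_one, hexponent]

end OneVariable

section Gaussian

variable {ι : Type*} [Fintype ι]

/-- The inhomogeneous Gaussian `exp(-½(v†Av - aᵀv - v†b))`. The linear coefficients `a` and `b` are
independent, so that the family is stable under every complex linear change of variables. -/
noncomputable def gaussianExp (A : Matrix ι ι ℂ) (a b v : ι → ℂ) : ℂ :=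
  cexp (-(1 / 2) * (star v ⬝ᵥ A *ᵥ v - a ⬝ᵥ v - star v ⬝ᵥ b))

theorem gaussianExp_mulVec (A P : Matrix ι ι ℂ) (a b w : ι → ℂ) :
    gaussianExp A a b (P *ᵥ w) = gaussianExp (Pᴴ * A * P) (a ᵥ* P) (Pᴴ *ᵥ b) w := by
  simp only [gaussianExp, star_mulVec, ← dotProduct_mulVec, mulVec_mulVec, mul_assoc]

variable [DecidableEq ι]

theorem gaussianExp_diagonal (d a b v : ι → ℂ) :
    gaussianExp (diagonal d) a b v =
      ∏ i, cexp (-(1 / 2) * (d i * (star (v i) * v i) - a i * v i - star (v i) * b i)) := by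
  rw [← exp_sum, gaussianExp, ← Finset.mul_sum, Finset.sum_sub_distrib, Finset.sum_sub_distrib]
  simp only [dotProduct, mulVec_diagonal, Pi.star_apply, mul_left_comm]

theorem integrable_gaussianExp_diagonal {d : ι → ℂ} (hd : ∀ i, 0 < (d i).re) (a b : ι → ℂ) :
    Integrable (gaussianExp (diagonal d) a b) := by
  simp only [funext (gaussianExp_diagonal d a b)]
  exact Integrable.fintype_prod fun i => integrable_cexp_star_mul_quadratic (hd i) (a i) (b i)

theorem integral_gaussianExp_diagonal {d : ι → ℂ} (hd : ∀ i, 0 < (d i).re) (a b : ι → ℂ) :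
    ∫ v, gaussianExp (diagonal d) a b v =
      (2 * π) ^ Fintype.card ι / (diagonal d).det *
        cexp (1 / 2 * (a ⬝ᵥ (diagonal d)⁻¹ *ᵥ b)) := by
  simp only [gaussianExp_diagonal]
  rw [integral_fintype_prod_volume_eq_prod fun i (z : ℂ) =>
    cexp (-(1 / 2) * (d i * (star z * z) - a i * z - star z * b i))]
  simp only [integral_cexp_star_mul_quadratic (hd _)]
  rw [Finset.prod_mul_distrib, Finset.prod_div_distrib, Finset.prod_const, Finset.card_univ,
    ← exp_sum, ← Finset.mul_sum, det_diagonal,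
    inv_diagonal_mulVec fun i => ne_zero_of_re_pos (hd i), dotProduct]

variable {A : Matrix ι ι ℂ}

omit [DecidableEq ι] in
theorem integrable_gaussianExp (hA : (A + Aᴴ).PosDef) (a b : ι → ℂ) :
    Integrable (gaussianExp A a b) := by
  classical
  obtain ⟨P, d, hP, hd, hPA⟩ := exists_conjTranspose_mul_mul_eq_diagonal hA
  rw [← integrable_comp_mulVec_iff hP]
  simp only [gaussianExp_mulVec, hPA]
  exact integrable_gaussianExp_diagonal hd _ _

theorem integral_gaussianExp (hA : (A + Aᴴ).PosDef) (a b : ι → ℂ) :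
    ∫ v, gaussianExp A a b v =
      (2 * π) ^ Fintype.card ι / A.det * cexp (1 / 2 * (a ⬝ᵥ A⁻¹ *ᵥ b)) := by
  obtain ⟨P, d, hP, hd, hPA⟩ := exists_conjTranspose_mul_mul_eq_diagonal hA
  have hP_det : (normSq P.det : ℂ) ≠ 0 :=
    ofReal_ne_zero.mpr (normSq_pos.mpr ((isUnit_iff_isUnit_det P).mp hP).ne_zero).ne'
  have hP_star : IsUnit Pᴴ := hP.star
  have hdet : (Pᴴ * A * P).det = normSq P.det * A.det := by
    rw [det_mul, det_mul, det_conjTranspose, normSq_eq_conj_mul_self, starRingEnd_apply,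
      mul_right_comm]
  have hdot : a ᵥ* P ⬝ᵥ (Pᴴ * A * P)⁻¹ *ᵥ Pᴴ *ᵥ b = a ⬝ᵥ A⁻¹ *ᵥ b := by
    rw [← dotProduct_mulVec, mulVec_mulVec, mulVec_mulVec, mul_inv_mul_mul_mul_cancel hP hP_star]
  have hintegral : (normSq P.det)⁻¹ • ∫ v, gaussianExp A a b v =
      (2 * π) ^ Fintype.card ι / (Pᴴ * A * P).det * cexp (1 / 2 * (a ⬝ᵥ A⁻¹ *ᵥ b)) := by
    rw [← integral_comp_mulVec hP, ← hdot, hPA, ← integral_gaussianExp_diagonal hd]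
    simp only [gaussianExp_mulVec, hPA]
  rw [real_smul, ofReal_inv, inv_mul_eq_iff_eq_mul₀ hP_det, hdet] at hintegral
  rw [hintegral]
  field_simp

end Gaussian

section TwistedConvolution

variable {ι : Type*} [Fintype ι]

/-- The measure `(2π)⁻ⁿ · Leb` on `ℂⁿ`, with the coordinates indexed by a finite type. It gives mass
one to the Gaussian `exp(-½⟨v, v⟩)`. -/
noncomputable def gaussianVolume (ι : Type*) [Fintype ι] : Measure (ι → ℂ) :=
  (ENNReal.ofReal ((2 * π) ^ Fintype.card ι))⁻¹ • volume

theorem dvol_eq_gaussianVolume (n : ℕ) : dvol n = gaussianVolume (Fin n) := by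
  rw [dvol, gaussianVolume, Fintype.card_fin]

theorem integrable_gaussianVolume_iff {E : Type*} [NormedAddCommGroup E] {f : (ι → ℂ) → E} :
    Integrable f (gaussianVolume ι) ↔ Integrable f := by
  refine integrable_smul_measure (ENNReal.inv_ne_zero.mpr ENNReal.ofReal_ne_top) ?_
  exact ENNReal.inv_ne_top.mpr (ENNReal.ofReal_pos.mpr (by positivity)).ne'

theorem integral_gaussianVolume {E : Type*} [NormedAddCommGroup E] [NormedSpace ℝ E]
    (f : (ι → ℂ) → E) :
    ∫ v, f v ∂gaussianVolume ι = ((2 * π) ^ Fintype.card ι)⁻¹ • ∫ v, f v := by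
  rw [gaussianVolume, integral_smul_measure, ENNReal.toReal_inv,
    ENNReal.toReal_ofReal (by positivity)]

variable [DecidableEq ι] {S X Y : Matrix ι ι ℂ}

theorem integral_gaussianExp_gaussianVolume {A : Matrix ι ι ℂ} (hA : (A + Aᴴ).PosDef)
    (a b : ι → ℂ) :
    ∫ v, gaussianExp A a b v ∂gaussianVolume ι =
      A.det⁻¹ * cexp (1 / 2 * (a ⬝ᵥ A⁻¹ *ᵥ b)) := by
  have hpi : (2 * π : ℂ) ^ Fintype.card ι ≠ 0 := pow_ne_zero _ (by simp [Real.pi_ne_zero])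
  rw [integral_gaussianVolume, integral_gaussianExp hA, real_smul]
  push_cast
  field_simp

/-- The Gaussian `γ_X(v) = det(X + S) exp(-½⟨v, Xv⟩)` normalized by an arbitrary matrix `S` in place
of the signature matrix `s`. -/
noncomputable def normalizedGaussian (S X : Matrix ι ι ℂ) (v : ι → ℂ) : ℂ :=
  (X + S).det * cexp (-(1 / 2) * (star v ⬝ᵥ X *ᵥ v))

theorem gaussianFn_eq_normalizedGaussian (p q : ℕ) :
    gaussianFn p q = normalizedGaussian (sMat p q) := rfl

theorem isHermitian_sMat (p q : ℕ) : (sMat p q).IsHermitian := by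
  refine isHermitian_diagonal_of_self_adjoint _ (funext fun i => ?_)
  simp only [Pi.star_apply, apply_ite star, star_one, star_neg]

theorem normalizedGaussian_mul_normalizedGaussian_mul_cexp (hS : S.IsHermitian) (u v : ι → ℂ) :
    normalizedGaussian S X (u - v) * normalizedGaussian S Y v *
        cexp (-I * ((star u ⬝ᵥ S *ᵥ v).im : ℂ)) =
      normalizedGaussian S X u * (Y + S).det *
        gaussianExp (X + Y) (star u ᵥ* (X - S)) ((X + S) *ᵥ u) v := by
  have hexponent : -(1 / 2) * (star (u - v) ⬝ᵥ X *ᵥ (u - v)) + -(1 / 2) * (star v ⬝ᵥ Y *ᵥ v) +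
      -(1 / 2) * (star u ⬝ᵥ S *ᵥ v - star v ⬝ᵥ S *ᵥ u) =
      -(1 / 2) * (star u ⬝ᵥ X *ᵥ u) + -(1 / 2) * (star v ⬝ᵥ (X + Y) *ᵥ v -
        star u ᵥ* (X - S) ⬝ᵥ v - star v ⬝ᵥ (X + S) *ᵥ u) := by
    simp only [← dotProduct_mulVec, star_sub, mulVec_sub, sub_mulVec, add_mulVec, dotProduct_add,
      dotProduct_sub, sub_dotProduct]
    ring
  have hcexp := congrArg cexp hexponent
  simp only [exp_add] at hcexp
  rw [neg_I_mul_im_star_dotProduct_mulVec hS, normalizedGaussian, normalizedGaussian,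
    normalizedGaussian, gaussianExp]
  linear_combination (X + S).det * (Y + S).det * hcexp

theorem normalizedGaussian_add_mul_inv_add_mul_add_sub (hXY : IsUnit (X + Y)) (u : ι → ℂ) :
    normalizedGaussian S ((Y + S) * (X + Y)⁻¹ * (X + S) - S) u =
      normalizedGaussian S X u * (Y + S).det *
        ((X + Y).det⁻¹ * cexp (1 / 2 * (star u ᵥ* (X - S) ⬝ᵥ (X + Y)⁻¹ *ᵥ (X + S) *ᵥ u))) := by
  have hdet : ((Y + S) * (X + Y)⁻¹ * (X + S)).det =
      (X + S).det * (Y + S).det * (X + Y).det⁻¹ := by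
    rw [det_mul, det_mul, det_nonsing_inv, Ring.inverse_eq_inv']
    ring
  have hexponent :
      -(1 / 2) * (star u ⬝ᵥ ((Y + S) * (X + Y)⁻¹ * (X + S) - S) *ᵥ u) =
      -(1 / 2) * (star u ⬝ᵥ X *ᵥ u) +
        1 / 2 * (star u ᵥ* (X - S) ⬝ᵥ (X + Y)⁻¹ *ᵥ (X + S) *ᵥ u) := by
    rw [add_mul_inv_add_mul_add_sub hXY, sub_mulVec, dotProduct_sub, ← dotProduct_mulVec,
      mulVec_mulVec, mulVec_mulVec, mul_assoc]
    ring
  rw [normalizedGaussian, sub_add_cancel, hdet, hexponent, exp_add, normalizedGaussian]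
  ring

theorem gaussian_twisted_convolution_general (hS : S.IsHermitian)
    (hXY : ((X + Y) + (X + Y)ᴴ).PosDef) (u : ι → ℂ) :
    IsUnit (X + Y) ∧
    Integrable (fun v => normalizedGaussian S X (u - v) * normalizedGaussian S Y v *
      cexp (-I * ((star u ⬝ᵥ S *ᵥ v).im : ℂ))) (gaussianVolume ι) ∧
    ∫ v, normalizedGaussian S X (u - v) * normalizedGaussian S Y v *
        cexp (-I * ((star u ⬝ᵥ S *ᵥ v).im : ℂ)) ∂gaussianVolume ι =
      normalizedGaussian S ((Y + S) * (X + Y)⁻¹ * (X + S) - S) u := by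
  have hunit : IsUnit (X + Y) := isUnit_of_posDef_add_conjTranspose hXY
  simp only [normalizedGaussian_mul_normalizedGaussian_mul_cexp hS]
  refine ⟨hunit, ?_, ?_⟩
  · exact integrable_gaussianVolume_iff.mpr ((integrable_gaussianExp hXY _ _).const_mul _)
  · rw [integral_const_mul, integral_gaussianExp_gaussianVolume hXY,
      normalizedGaussian_add_mul_inv_add_mul_add_sub hunit]

end TwistedConvolution

/-- **Twisted convolution of Gaussians** (proof of Lemma 5.6): for `X, Y ∈ ζ_s⁺`
the matrix `X + Y` is invertible, the twisted convolution integral converges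
absolutely, and `γ_X ♯ γ_Y = γ_{X∘Y}` with
`X ∘ Y = (Y+s)(X+Y)⁻¹(X+s) − s`. -/
theorem gaussian_twisted_convolution (p q : ℕ) (hp : 1 ≤ p) (hq : 1 ≤ q)
    (X Y : Matrix (Fin (p + q)) (Fin (p + q)) ℂ)
    (hX : (X + Xᴴ).PosDef) (hXdet : (X + sMat p q).det ≠ 0)
    (hY : (Y + Yᴴ).PosDef) (hYdet : (Y + sMat p q).det ≠ 0)
    (u : Fin (p + q) → ℂ) :
    IsUnit (X + Y) ∧
    Integrable (fun v : Fin (p + q) → ℂ =>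
      gaussianFn p q X (u - v) * gaussianFn p q Y v *
        Complex.exp (-Complex.I * ((star u ⬝ᵥ (sMat p q *ᵥ v)).im : ℂ)))
      (dvol (p + q)) ∧
    (∫ v : Fin (p + q) → ℂ,
        gaussianFn p q X (u - v) * gaussianFn p q Y v *
          Complex.exp (-Complex.I * ((star u ⬝ᵥ (sMat p q *ᵥ v)).im : ℂ))
        ∂(dvol (p + q)))
      = gaussianFn p q
          ((Y + sMat p q) * (X + Y)⁻¹ * (X + sMat p q) - sMat p q) u := by
  have hXY : ((X + Y) + (X + Y)ᴴ).PosDef := by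
    simpa only [conjTranspose_add, add_add_add_comm] using hX.add hY
  simpa only [gaussianFn_eq_normalizedGaussian, dvol_eq_gaussianVolume] using
    gaussian_twisted_convolution_general (isHermitian_sMat p q) hXY u
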